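/- arXiv:2403.12063 — 3 statements merged into one kernel-verified Lean document; each statement's English description precedes it below -/
import Mathlib

section
/- (Lemma 3.3) Let h : ℝ → ℝ be a variance schedule with h(t) > 0 and h differentiable at t, and for each t define the time-t marginal density P_t(x) := (1/N) Σ_{i=1}^N g_{σ² + h(t)}(x; μⁱ). Then for every x ∈ ℝ^d, the probability-flow ODE drift −(1/2) · h′(t) · ∇_x log P_t(x) equals the velocity field v_t(x) := Σ_{i=1}^N (w_i(t, x)/2) · h′(t) · (x − μⁱ) / (σ² + h(t)), where w_i(t, x) := exp(−‖x − μⁱ‖² / (2(σ² + h(t)))) / Σ_{j=1}^N exp(−‖x − μʲ‖² / (2(σ² + h(t)))). Consequently, a curve X : ℝ → ℝ^d satisfies the PF-ODE X′(t) = −(1/2) h′(t) ∇ log P_t(X(t)) if and only if X′(t) = v_t(X(t)). -/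
open Real

/-- Isotropic Gaussian density `g_s(x; μ)` on `ℝ^d`. -/
noncomputable def gauss (d : ℕ) (s : ℝ) (x μ : EuclideanSpace ℝ (Fin d)) : ℝ :=
  (2 * Real.pi * s) ^ (-(d : ℝ) / 2) * Real.exp (-‖x - μ‖ ^ 2 / (2 * s))

/-- Time-`t` marginal density for the variance schedule `h`. -/
noncomputable def marginalAt (d N : ℕ) (μ : Fin N → EuclideanSpace ℝ (Fin d)) (σ : ℝ)
    (h : ℝ → ℝ) (t : ℝ) (x : EuclideanSpace ℝ (Fin d)) : ℝ :=
  (1 / N) * ∑ i, gauss d (σ ^ 2 + h t) x (μ i)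

/-- Softmax weights of the time-`t` marginal. -/
noncomputable def weightAt (d N : ℕ) (μ : Fin N → EuclideanSpace ℝ (Fin d)) (σ : ℝ)
    (h : ℝ → ℝ) (t : ℝ) (x : EuclideanSpace ℝ (Fin d)) (i : Fin N) : ℝ :=
  Real.exp (-‖x - μ i‖ ^ 2 / (2 * (σ ^ 2 + h t))) /
    ∑ j : Fin N, Real.exp (-‖x - μ j‖ ^ 2 / (2 * (σ ^ 2 + h t)))

/-- PF-ODE velocity field. -/
noncomputable def velocityField (d N : ℕ) (μ : Fin N → EuclideanSpace ℝ (Fin d)) (σ : ℝ)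
    (h : ℝ → ℝ) (t : ℝ) (x : EuclideanSpace ℝ (Fin d)) : EuclideanSpace ℝ (Fin d) :=
  ∑ i : Fin N,
    ((weightAt d N μ σ h t x i / 2) * deriv h t / (σ ^ 2 + h t)) • (x - μ i)

/-- Derivative of an unnormalised Gaussian. -/
theorem hasFDerivAt_expGauss (d : ℕ) (s : ℝ) (x m : EuclideanSpace ℝ (Fin d)) :
    HasFDerivAt (fun y : EuclideanSpace ℝ (Fin d) => Real.exp (-‖y - m‖ ^ 2 / (2 * s)))
      ((Real.exp (-‖x - m‖ ^ 2 / (2 * s)) * (-1 / s)) • innerSL ℝ (x - m)) x := by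
  have h1 : HasFDerivAt (fun y : EuclideanSpace ℝ (Fin d) => ‖y - m‖ ^ 2)
      (2 • (innerSL ℝ (x - m))) x := by
    have := ((hasFDerivAt_id (𝕜 := ℝ) x).sub_const m).norm_sq
    simpa using this
  have h2 := (h1.mul_const (-1 / (2 * s))).exp
  refine (h2.congr_fderiv ?_).congr_of_eventuallyEq ?_
  · ext v
    have e : ‖x - m‖ ^ 2 * (-1 / (2 * s)) = -‖x - m‖ ^ 2 / (2 * s) := by ring
    rw [e]
    simp only [ContinuousLinearMap.smul_apply, smul_eq_mul, nsmul_eq_mul, Nat.cast_ofNat]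
    by_cases hs : s = 0
    · simp [hs]
    · field_simp
  · refine Filter.Eventually.of_forall fun y => ?_
    simp only []
    congr 1
    ring

/-- (Lemma 3.3) The probability-flow ODE drift equals the softmax velocity field, and hence a
curve solves the PF-ODE iff it solves the velocity-field ODE. -/
theorem pf_ode_velocity_field (d N : ℕ) (hd : 1 ≤ d) (hN : 1 ≤ N)
    (μ : Fin N → EuclideanSpace ℝ (Fin d)) (σ : ℝ) (hσ : 0 < σ)
    (h : ℝ → ℝ) (t : ℝ) (hpos : 0 < h t) (hdiff : DifferentiableAt ℝ h t) :
    (∀ x : EuclideanSpace ℝ (Fin d),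
        (-(1 / 2) * deriv h t) • gradient (fun y => Real.log (marginalAt d N μ σ h t y)) x
          = velocityField d N μ σ h t x) ∧
    (∀ X : ℝ → EuclideanSpace ℝ (Fin d),
        HasDerivAt X
            ((-(1 / 2) * deriv h t) •
              gradient (fun y => Real.log (marginalAt d N μ σ h t y)) (X t)) t
          ↔ HasDerivAt X (velocityField d N μ σ h t (X t)) t) := by
  have hs : 0 < σ ^ 2 + h t := by positivity
  have key : ∀ x : EuclideanSpace ℝ (Fin d),
      (-(1 / 2) * deriv h t) • gradient (fun y => Real.log (marginalAt d N μ σ h t y)) x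
        = velocityField d N μ σ h t x := by
    intro x
    unfold velocityField weightAt
    have hm : ∀ y, marginalAt d N μ σ h t y
        = ((1 / N) * (2 * Real.pi * (σ ^ 2 + h t)) ^ (-(d : ℝ) / 2)) *
          ∑ i, Real.exp (-‖y - μ i‖ ^ 2 / (2 * (σ ^ 2 + h t))) := by
      intro y
      simp only [marginalAt, gauss, ← Finset.mul_sum, mul_assoc]
    have hNpos : (0 : ℝ) < N := by exact_mod_cast hN
    have hC : 0 < (1 / (N : ℝ)) * (2 * Real.pi * (σ ^ 2 + h t)) ^ (-(d : ℝ) / 2) := by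
      positivity
    simp only [hm]
    generalize (1 / (N : ℝ)) * (2 * Real.pi * (σ ^ 2 + h t)) ^ (-(d : ℝ) / 2) = C at hC
    generalize σ ^ 2 + h t = s at hs
    have hS : 0 < ∑ j : Fin N, Real.exp (-‖x - μ j‖ ^ 2 / (2 * s)) :=
      Finset.sum_pos (fun i _ => Real.exp_pos _) ⟨⟨0, hN⟩, Finset.mem_univ _⟩
    have hF := ((HasFDerivAt.fun_sum (u := Finset.univ)
      (fun i _ => hasFDerivAt_expGauss d s x (μ i))).const_mul C).log (mul_pos hC hS).ne'
    have hG : HasGradientAt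
        (fun y => Real.log (C * ∑ i, Real.exp (-‖y - μ i‖ ^ 2 / (2 * s))))
        (∑ i, (Real.exp (-‖x - μ i‖ ^ 2 / (2 * s)) /
          (∑ j : Fin N, Real.exp (-‖x - μ j‖ ^ 2 / (2 * s))) * (-1 / s)) • (x - μ i)) x := by
      rw [hasGradientAt_iff_hasFDerivAt]
      refine hF.congr_fderiv ?_
      ext v
      simp only [ContinuousLinearMap.smul_apply, ContinuousLinearMap.sum_apply, smul_eq_mul,
        InnerProductSpace.toDual_apply_apply, sum_inner, innerSL_apply_apply, inner_smul_left,
        Finset.mul_sum, RCLike.conj_to_real]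
      refine Finset.sum_congr rfl fun i _ => ?_
      rw [← Finset.mul_sum]
      have hS' := hS.ne'
      field_simp
    rw [hG.gradient, Finset.smul_sum]
    refine Finset.sum_congr rfl fun i _ => ?_
    rw [smul_smul]
    congr 1
    ring
  refine ⟨key, fun X => ?_⟩
  rw [key]
end

section
/- (Proposition 3.2, deterministic form) Let c > 0 and let x₀, x_t ∈ ℝ^d satisfy ‖x₀‖ ≤ c and ‖x_t‖ ≤ c. Suppose σ² ≤ σ_t², and suppose there exists an index k ∈ {1, …, N} with ‖x₀ − μᵏ‖² ≤ σ² + d·σ². Then the posterior density is bounded below: p_{0|t}(x₀ | x_t) ≥ (1/N) · (4πσ²)^(−d/2) · exp(−2c²/σ_t² − (d+1)/2). -/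
open Real

/-- GMM prior density. -/
noncomputable def gmmPrior (d N : ℕ) (μ : Fin N → EuclideanSpace ℝ (Fin d)) (σ : ℝ)
    (x : EuclideanSpace ℝ (Fin d)) : ℝ :=
  (1 / N) * ∑ i, gauss d (σ ^ 2) x (μ i)

/-- Noisy marginal density. -/
noncomputable def gmmMarginal (d N : ℕ) (μ : Fin N → EuclideanSpace ℝ (Fin d)) (σ σt : ℝ)
    (x : EuclideanSpace ℝ (Fin d)) : ℝ :=
  (1 / N) * ∑ i, gauss d (σ ^ 2 + σt ^ 2) x (μ i)

/-- Posterior density `p_{0|t}(x₀ | x_t)`. -/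
noncomputable def gmmPosterior (d N : ℕ) (μ : Fin N → EuclideanSpace ℝ (Fin d)) (σ σt : ℝ)
    (x₀ xt : EuclideanSpace ℝ (Fin d)) : ℝ :=
  gauss d (σt ^ 2) xt x₀ * gmmPrior d N μ σ x₀ / gmmMarginal d N μ σ σt xt

/-- (Proposition 3.2, deterministic form) Lower bound on the posterior density. -/
theorem gmm_posterior_lower_bound (d N : ℕ) (hd : 1 ≤ d) (hN : 1 ≤ N)
    (μ : Fin N → EuclideanSpace ℝ (Fin d)) (σ σt : ℝ) (hσ : 0 < σ) (hσt : 0 < σt)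
    (c : ℝ) (hc : 0 < c) (x₀ xt : EuclideanSpace ℝ (Fin d))
    (hx₀ : ‖x₀‖ ≤ c) (hxt : ‖xt‖ ≤ c) (hσσt : σ ^ 2 ≤ σt ^ 2)
    (hk : ∃ k : Fin N, ‖x₀ - μ k‖ ^ 2 ≤ σ ^ 2 + d * σ ^ 2) :
    gmmPosterior d N μ σ σt x₀ xt
      ≥ (1 / N) * (4 * Real.pi * σ ^ 2) ^ (-(d : ℝ) / 2) *
          Real.exp (-2 * c ^ 2 / σt ^ 2 - (d + 1) / 2) := by
  obtain ⟨k, hk⟩ := hk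
  have hNpos : (0:ℝ) < N := by exact_mod_cast hN
  have hs : 0 < σ ^ 2 := by positivity
  have ht : 0 < σt ^ 2 := by positivity
  have hpi := Real.pi_pos
  have hgpos : ∀ s : ℝ, 0 < s → ∀ x m : EuclideanSpace ℝ (Fin d), 0 < gauss d s x m := by
    intro s hs x m
    unfold gauss
    positivity
  have hd2 : -(d:ℝ) / 2 ≤ 0 := by
    have : (0:ℝ) ≤ d := Nat.cast_nonneg d
    linarith
  -- upper bound on the marginal
  have hM : gmmMarginal d N μ σ σt xt ≤ (2 * Real.pi * (σ ^ 2 + σt ^ 2)) ^ (-(d : ℝ) / 2) := by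
    unfold gmmMarginal
    have h1 : ∑ i, gauss d (σ ^ 2 + σt ^ 2) xt (μ i)
        ≤ ∑ _i : Fin N, (2 * Real.pi * (σ ^ 2 + σt ^ 2)) ^ (-(d : ℝ) / 2) := by
      apply Finset.sum_le_sum
      intro i _
      unfold gauss
      apply mul_le_of_le_one_right (by positivity)
      rw [Real.exp_le_one_iff]
      apply div_nonpos_of_nonpos_of_nonneg
      · have := sq_nonneg ‖xt - μ i‖
        linarith
      · positivity
    rw [Finset.sum_const, Finset.card_univ, Fintype.card_fin, nsmul_eq_mul] at h1
    rw [one_div, inv_mul_le_iff₀ hNpos]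
    exact h1
  have hMpos : 0 < gmmMarginal d N μ σ σt xt := by
    unfold gmmMarginal
    apply mul_pos (by positivity)
    exact Finset.sum_pos (fun i _ => hgpos _ (by positivity) _ _) ⟨k, Finset.mem_univ k⟩
  -- lower bound on the prior
  have hP : (1 / N) * ((2 * Real.pi * σ ^ 2) ^ (-(d : ℝ) / 2) * Real.exp (-((d + 1) / 2)))
      ≤ gmmPrior d N μ σ x₀ := by
    unfold gmmPrior
    apply mul_le_mul_of_nonneg_left _ (by positivity)
    refine le_trans ?_ (Finset.single_le_sum (f := fun i => gauss d (σ ^ 2) x₀ (μ i))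
      (fun i _ => (hgpos _ hs _ _).le) (Finset.mem_univ k))
    simp only [gauss]
    apply mul_le_mul_of_nonneg_left _ (by positivity)
    rw [Real.exp_le_exp, neg_div, neg_le_neg_iff, div_le_div_iff₀ (by positivity) (by positivity)]
    nlinarith
  -- lower bound on the likelihood
  have hL : (2 * Real.pi * σt ^ 2) ^ (-(d : ℝ) / 2) * Real.exp (-2 * c ^ 2 / σt ^ 2)
      ≤ gauss d (σt ^ 2) xt x₀ := by
    unfold gauss
    apply mul_le_mul_of_nonneg_left _ (by positivity)
    have h2 : ‖xt - x₀‖ ≤ 2 * c := (norm_sub_le _ _).trans (by linarith)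
    have h3 : ‖xt - x₀‖ ^ 2 ≤ (2 * c) ^ 2 := pow_le_pow_left₀ (norm_nonneg _) h2 2
    rw [Real.exp_le_exp, div_le_div_iff₀ (by positivity) (by positivity)]
    nlinarith
  -- comparison of constants
  have hC : (4 * Real.pi * σ ^ 2) ^ (-(d : ℝ) / 2) * (2 * Real.pi * (σ ^ 2 + σt ^ 2)) ^ (-(d : ℝ) / 2)
      ≤ (2 * Real.pi * σt ^ 2) ^ (-(d : ℝ) / 2) * (2 * Real.pi * σ ^ 2) ^ (-(d : ℝ) / 2) := by
    rw [← Real.mul_rpow (by positivity) (by positivity),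
      ← Real.mul_rpow (by positivity) (by positivity)]
    apply Real.rpow_le_rpow_of_nonpos (by positivity) _ hd2
    have h1 : 2 * Real.pi * σt ^ 2 ≤ 2 * Real.pi * (σ ^ 2 + σt ^ 2) := by
      apply mul_le_mul_of_nonneg_left <;> [linarith; positivity]
    have h2 : 2 * Real.pi * σ ^ 2 ≤ 4 * Real.pi * σ ^ 2 := by
      apply mul_le_mul_of_nonneg_right <;> [linarith; positivity]
    rw [mul_comm (4 * Real.pi * σ ^ 2)]
    exact mul_le_mul h1 h2 (by positivity) (by positivity)
  unfold gmmPosterior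
  rw [ge_iff_le, le_div_iff₀ hMpos, sub_eq_add_neg, Real.exp_add]
  refine le_trans (mul_le_mul_of_nonneg_left hM (by positivity)) ?_
  refine le_trans ?_ (mul_le_mul hL hP (by positivity) (hgpos _ ht _ _).le)
  have := mul_le_mul_of_nonneg_left hC
    (show 0 ≤ (1 / (N:ℝ)) * Real.exp (-2 * c ^ 2 / σt ^ 2) * Real.exp (-((d + 1) / 2)) by positivity)
  linarith
end

section
/- (Tweedie's formula for the Gaussian mixture) For every x_t ∈ ℝ^d, the posterior mean of the GMM posterior equals the Tweedie estimate: ∫_{ℝ^d} x₀ · p_{0|t}(x₀ | x_t) dx₀ = x_t + σ_t² · ∇ log p_t(x_t), where the left-hand side is the Bochner integral of the ℝ^d-valued function x₀ ↦ p_{0|t}(x₀ | x_t) • x₀ and the gradient on the right is taken in the Hilbert-space sense. -/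
open MeasureTheory Real

section Helpers

variable {d : ℕ}

lemma gauss_pos (s : ℝ) (hs : 0 < s) (x m : EuclideanSpace ℝ (Fin d)) : 0 < gauss d s x m := by
  unfold gauss
  have := Real.pi_pos
  positivity

lemma integrable_exp_sq (b : ℝ) (hb : 0 < b) :
    Integrable (fun v : EuclideanSpace ℝ (Fin d) => rexp (-b * ‖v‖ ^ 2)) := by
  apply Integrable.of_integral_ne_zero
  rw [GaussianFourier.integral_rexp_neg_mul_sq_norm hb]
  have := Real.pi_pos
  positivity

lemma integrable_exp_sq_smul (b : ℝ) (hb : 0 < b) :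
    Integrable (fun v : EuclideanSpace ℝ (Fin d) => rexp (-b * ‖v‖ ^ 2) • v) := by
  refine Integrable.mono' ((integrable_exp_sq (d := d) (b / 2) (by positivity)).const_mul
    (1 + 2 / b)) (by fun_prop) (Filter.Eventually.of_forall fun v => ?_)
  rw [norm_smul, Real.norm_eq_abs, abs_of_pos (Real.exp_pos _)]
  have h1 : rexp (-(b / 2) * ‖v‖ ^ 2) = rexp (-b * ‖v‖ ^ 2) * rexp (b / 2 * ‖v‖ ^ 2) := by
    rw [← Real.exp_add]; congr 1; ring
  have h2 := Real.add_one_le_exp (b / 2 * ‖v‖ ^ 2)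
  have h3 : ‖v‖ ≤ (1 + 2 / b) * (b / 2 * ‖v‖ ^ 2 + 1) := by
    have : (1 + 2 / b) * (b / 2 * ‖v‖ ^ 2 + 1) = ‖v‖ ^ 2 + 1 + (b / 2 * ‖v‖ ^ 2 + 2 / b) := by
      field_simp; ring
    rw [this]
    have : 0 ≤ b / 2 * ‖v‖ ^ 2 + 2 / b := by positivity
    nlinarith [sq_nonneg (‖v‖ - 1)]
  have h4 : ‖v‖ ≤ (1 + 2 / b) * rexp (b / 2 * ‖v‖ ^ 2) :=
    h3.trans (by gcongr)
  rw [h1]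
  calc _ ≤ rexp (-b * ‖v‖ ^ 2) * ((1 + 2 / b) * rexp (b / 2 * ‖v‖ ^ 2)) := by gcongr
    _ = _ := by ring

lemma integral_exp_sq_smul (b : ℝ) :
    ∫ v : EuclideanSpace ℝ (Fin d), rexp (-b * ‖v‖ ^ 2) • v = 0 := by
  have h := integral_neg_eq_self (fun v : EuclideanSpace ℝ (Fin d) => rexp (-b * ‖v‖ ^ 2) • v)
    volume
  simp only [norm_neg, smul_neg, integral_neg] at h
  have h2 : (2 : ℝ) • ∫ v : EuclideanSpace ℝ (Fin d), rexp (-b * ‖v‖ ^ 2) • v = 0 := by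
    rw [two_smul]
    nth_rewrite 1 [← h]
    exact neg_add_cancel _
  exact (smul_eq_zero.mp h2).resolve_left two_ne_zero

lemma integrable_smul_fun {f : EuclideanSpace ℝ (Fin d) → EuclideanSpace ℝ (Fin d)}
    (hf : Integrable f) (c : ℝ) : Integrable (fun x => c • f x) := hf.smul c

lemma gauss_shift (s : ℝ) (v m : EuclideanSpace ℝ (Fin d)) :
    gauss d s (v + m) m • (v + m) =
      (2 * π * s) ^ (-(d : ℝ) / 2) • (rexp (-(1 / (2 * s)) * ‖v‖ ^ 2) • v) +
      ((2 * π * s) ^ (-(d : ℝ) / 2) * rexp (-(1 / (2 * s)) * ‖v‖ ^ 2)) • m := by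
  unfold gauss
  have : -‖v + m - m‖ ^ 2 / (2 * s) = -(1 / (2 * s)) * ‖v‖ ^ 2 := by
    rw [add_sub_cancel_right]; ring
  rw [this, smul_add, smul_smul]

lemma integrable_gauss_smul (s : ℝ) (hs : 0 < s) (m : EuclideanSpace ℝ (Fin d)) :
    Integrable (fun x => gauss d s x m • x) := by
  have hb : 0 < 1 / (2 * s) := by positivity
  have : Integrable (fun v => gauss d s (v + m) m • (v + m)) := by
    simp only [gauss_shift]
    exact (integrable_smul_fun (integrable_exp_sq_smul _ hb) _).add
      (((integrable_exp_sq _ hb).const_mul _).smul_const m)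
  simpa using this.comp_sub_right m

lemma integral_gauss_smul (s : ℝ) (hs : 0 < s) (m : EuclideanSpace ℝ (Fin d)) :
    ∫ x, gauss d s x m • x = m := by
  have hb : 0 < 1 / (2 * s) := by positivity
  rw [← integral_add_right_eq_self (fun x => gauss d s x m • x) m]
  simp only [gauss_shift]
  rw [integral_add (integrable_smul_fun (integrable_exp_sq_smul _ hb) _)
      (((integrable_exp_sq _ hb).const_mul _).smul_const m), integral_smul,
    integral_exp_sq_smul, smul_zero, zero_add, integral_smul_const, integral_const_mul,
    GaussianFourier.integral_rexp_neg_mul_sq_norm hb]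
  have h1 : π / (1 / (2 * s)) = 2 * π * s := by field_simp
  have h2 : 0 < 2 * π * s := by have := Real.pi_pos; positivity
  rw [h1, ← Real.rpow_add h2, finrank_euclideanSpace_fin]
  have : -(d : ℝ) / 2 + d / 2 = 0 := by ring
  rw [this, Real.rpow_zero, one_smul]

lemma gauss_mul (s t : ℝ) (hs : 0 < s) (ht : 0 < t) (x y m : EuclideanSpace ℝ (Fin d)) :
    gauss d t x y * gauss d s y m = gauss d (s + t) x m *
      gauss d (s * t / (s + t)) y (m + (s / (s + t)) • (x - m)) := by
  unfold gauss
  have hp := Real.pi_pos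
  have hc : (2 * π * t) ^ (-(d : ℝ) / 2) * (2 * π * s) ^ (-(d : ℝ) / 2) =
      (2 * π * (s + t)) ^ (-(d : ℝ) / 2) * (2 * π * (s * t / (s + t))) ^ (-(d : ℝ) / 2) := by
    rw [← Real.mul_rpow (by positivity) (by positivity),
      ← Real.mul_rpow (by positivity) (by positivity)]
    congr 1; field_simp
  have he : -‖x - y‖ ^ 2 / (2 * t) + -‖y - m‖ ^ 2 / (2 * s) = -‖x - m‖ ^ 2 / (2 * (s + t)) +
      -‖y - (m + (s / (s + t)) • (x - m))‖ ^ 2 / (2 * (s * t / (s + t))) := by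
    have e1 : x - y = (x - m) - (y - m) := by abel
    have e2 : y - (m + (s / (s + t)) • (x - m)) = (y - m) - (s / (s + t)) • (x - m) := by abel
    rw [e1, e2]
    generalize x - m = a
    generalize y - m = b
    rw [norm_sub_sq_real, norm_sub_sq_real, norm_smul, inner_smul_right, real_inner_comm a b,
      mul_pow, Real.norm_eq_abs, sq_abs]
    field_simp
    ring
  rw [mul_mul_mul_comm, hc, ← Real.exp_add, he, Real.exp_add, mul_mul_mul_comm]

lemma hasGradientAt_gauss (s : ℝ) (hs : 0 < s) (x m : EuclideanSpace ℝ (Fin d)) :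
    HasGradientAt (fun y => gauss d s y m) (-(gauss d s x m / s) • (x - m)) x := by
  rw [hasGradientAt_iff_hasFDerivAt]
  have h := ((((hasFDerivAt_id x).sub_const m).norm_sq.neg.mul_const
    ((2 * s)⁻¹)).exp.const_mul ((2 * π * s) ^ (-(d : ℝ) / 2)))
  refine (h.congr_fderiv ?_).congr_of_eventuallyEq (Filter.Eventually.of_forall fun y => ?_)
  · ext v
    simp [gauss, div_eq_mul_inv]
    field_simp
  · simp [gauss, div_eq_mul_inv]

end Helpers

/-- (Tweedie's formula for the Gaussian mixture) The posterior mean equals the Tweedie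
estimate `x_t + σ_t² ∇ log p_t(x_t)`. -/
theorem gmm_tweedie (d N : ℕ) (hd : 1 ≤ d) (hN : 1 ≤ N)
    (μ : Fin N → EuclideanSpace ℝ (Fin d)) (σ σt : ℝ) (hσ : 0 < σ) (hσt : 0 < σt)
    (xt : EuclideanSpace ℝ (Fin d)) :
    ∫ x₀ : EuclideanSpace ℝ (Fin d), gmmPosterior d N μ σ σt x₀ xt • x₀
      = xt + (σt ^ 2) • gradient (fun y => Real.log (gmmMarginal d N μ σ σt y)) xt := by
  have hS : 0 < σ ^ 2 + σt ^ 2 := by positivity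
  have hs : 0 < σ ^ 2 := by positivity
  have ht : 0 < σt ^ 2 := by positivity
  have : Nonempty (Fin N) := ⟨⟨0, hN⟩⟩
  have hN' : (0 : ℝ) < N := by exact_mod_cast hN
  have hsum : 0 < ∑ i, gauss d (σ ^ 2 + σt ^ 2) xt (μ i) :=
    Finset.sum_pos (fun i _ => gauss_pos _ hS _ _) Finset.univ_nonempty
  have hp : 0 < gmmMarginal d N μ σ σt xt := by
    unfold gmmMarginal; positivity
  set S := σ ^ 2 + σt ^ 2 with hSdef
  -- the gradient
  have hgrad : gradient (fun y => Real.log (gmmMarginal d N μ σ σt y)) xt =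
      (∑ i, gauss d S xt (μ i))⁻¹ • ∑ i, (-(gauss d S xt (μ i) / S)) • (xt - μ i) := by
    apply HasGradientAt.gradient
    rw [hasGradientAt_iff_hasFDerivAt]
    have h1 : HasFDerivAt (fun y => gmmMarginal d N μ σ σt y) _ xt :=
      (HasFDerivAt.fun_sum (u := Finset.univ) (fun i _ =>
        (hasGradientAt_gauss S hS xt (μ i)).hasFDerivAt)).const_mul (1 / (N : ℝ))
    refine (h1.log hp.ne').congr_fderiv ?_
    rw [map_smul, map_sum, smul_smul]
    congr 1
    unfold gmmMarginal
    rw [← hSdef]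
    field_simp
  have hpost : ∀ x₀, gmmPosterior d N μ σ σt x₀ xt • x₀ =
      ∑ i, ((∑ i, gauss d S xt (μ i))⁻¹ * gauss d S xt (μ i)) •
        (gauss d (σ ^ 2 * σt ^ 2 / S) x₀ (μ i + (σ ^ 2 / S) • (xt - μ i)) • x₀) := by
    intro x₀
    simp only [smul_smul, ← Finset.sum_smul, mul_assoc, hSdef]
    simp only [← gauss_mul _ _ hs ht, ← Finset.mul_sum]
    congr 1
    unfold gmmPosterior gmmMarginal gmmPrior
    rw [← hSdef]
    field_simp
  simp only [hpost]
  have hr : 0 < σ ^ 2 * σt ^ 2 / S := by positivity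
  rw [integral_finsetSum _ (fun i _ => integrable_smul_fun (integrable_gauss_smul _ hr _) _)]
  simp only [integral_smul, integral_gauss_smul _ hr]
  rw [hgrad]
  have hx : xt = (∑ i, gauss d S xt (μ i))⁻¹ • ∑ i, gauss d S xt (μ i) • xt := by
    rw [← Finset.sum_smul, smul_smul, inv_mul_cancel₀ hsum.ne', one_smul]
  have key : ∀ i, μ i + (σ ^ 2 / S) • (xt - μ i) = xt + (-(σt ^ 2 / S)) • (xt - μ i) := by
    intro i
    have h1 : σ ^ 2 / S = 1 + -(σt ^ 2 / S) := by rw [hSdef]; field_simp; ring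
    rw [h1, add_smul, one_smul]; abel
  simp only [key, smul_add, Finset.sum_add_distrib, mul_smul, ← Finset.smul_sum]
  rw [← hx]
  congr 1
  rw [smul_comm]
  congr 1
  rw [Finset.smul_sum]
  refine Finset.sum_congr rfl fun i _ => ?_
  rw [smul_smul, smul_smul]
  congr 1
  ring
end
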